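/- For every integer d ≥ 1, the formal power series C^d(x) satisfies C^d(x) = x/(1 − C^{d−1}(x)) (equivalently (1 − C^{d−1}(x))·C^d(x) = x), where C^0(x) := x, and moreover F_{d+2}(x)·C^d(x) = x·F_{d+1}(x), i.e. C^d(x) = x·F_{d+1}(x)/F_{d+2}(x). -/

import Mathlib

/-- Full binary trees (every internal node has exactly two children). -/
inductive BTree : Type
  | leaf : BTree
  | node : BTree → BTree → BTree
deriving DecidableEq

namespace BTree

/-- Number of leaves of a full binary tree. -/
def numLeaves : BTree → ℕ
  | leaf => 1
  | node l r => l.numLeaves + r.numLeaves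

/-- The list of pairs (left depth, right depth) of the leaves, in preorder. -/
def leafDepths : BTree → List (ℕ × ℕ)
  | leaf => [(0, 0)]
  | node l r =>
      (l.leafDepths.map fun p => (p.1 + 1, p.2)) ++ (r.leafDepths.map fun p => (p.1, p.2 + 1))

/-- The left depth sequence `ld(t)` of the leaves of `t`, in preorder. -/
def ld (t : BTree) : List ℕ := t.leafDepths.map Prod.fst

/-- The right depth sequence `rd(t)` of the leaves of `t`, in preorder. -/
def rd (t : BTree) : List ℕ := t.leafDepths.map Prod.snd

end BTree

/-- `b ~^d c` : the sequences have equal length and agree at every position where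
either entry is `< d`. -/
def DepthEq (d : ℕ) : List ℕ → List ℕ → Prop :=
  List.Forall₂ (fun a b => min a b < d → a = b)

/-- `b ~_k c` : entrywise congruence mod `k` (and equal length). -/
def ModListEq (k : ℕ) : List ℕ → List ℕ → Prop :=
  List.Forall₂ (fun a b => a % k = b % k)

/-- The relation `t ~ t'` iff `ld(t) ~^d ld(t')` and `rd(t) ~^e rd(t')`. -/
def DeRel (d e : ℕ) (t t' : BTree) : Prop :=
  DepthEq d t.ld t'.ld ∧ DepthEq e t.rd t'.rd

/-- The relation `t ~ t'` iff `ld(t) ~_k^d ld(t')` (i.e. `ld(t) ~_k ld(t')` and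
`ld(t) ~^d ld(t')`). -/
def DkRel (d k : ℕ) (t t' : BTree) : Prop :=
  ModListEq k t.ld t'.ld ∧ DepthEq d t.ld t'.ld

/-- `T_n`: full binary trees with `n+1` leaves. -/
def Tn (n : ℕ) : Type := {t : BTree // t.numLeaves = n + 1}

/-- `C^{d,e}_n`: the number of equivalence classes of the relation `DeRel d e` on `T_n`. -/
noncomputable def Cde (d e n : ℕ) : ℕ :=
  Nat.card (Quot (fun t t' : Tn n => DeRel d e t.1 t'.1))

/-- `C^d_{k,n}`: the number of equivalence classes of `ld(t) ~_k^d ld(t')` on `T_n`. -/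
noncomputable def Cdk (d k n : ℕ) : ℕ :=
  Nat.card (Quot (fun t t' : Tn n => DkRel d k t.1 t'.1))

/-- Fibonacci polynomials (as formal power series): `F_0 = 0`, `F_1 = 1`, and
`F_n = F_{n-1} - x·F_{n-2}` for `n ≥ 2`. -/
noncomputable def FibP : ℕ → PowerSeries ℚ
  | 0 => 0
  | 1 => 1
  | n + 2 => FibP (n + 1) - PowerSeries.X * FibP n

/-- The generating function `C^d(x) = Σ_{n≥0} C^{d,1}_n x^{n+1}`, with `C^0(x) := x`. -/
noncomputable def CdX : ℕ → PowerSeries ℚ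
  | 0 => PowerSeries.X
  | d + 1 => PowerSeries.mk fun m => match m with
      | 0 => 0
      | n + 1 => (Cde (d + 1) 1 n : ℚ)

/-- Truncated left depth sequence. -/
def trunc (d : ℕ) (t : BTree) : List ℕ := t.ld.map (min d)

theorem ld_leaf : BTree.leaf.ld = [0] := rfl

theorem ld_node (l r : BTree) : (BTree.node l r).ld = l.ld.map (· + 1) ++ r.ld := by
  simp [BTree.ld, BTree.leafDepths, Function.comp_def]

theorem rd_node (l r : BTree) : (BTree.node l r).rd = l.rd ++ r.rd.map (· + 1) := by
  simp [BTree.rd, BTree.leafDepths, Function.comp_def]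

theorem length_ld (t : BTree) : t.ld.length = t.numLeaves := by
  induction t with
  | leaf => rfl
  | node l r hl hr => simp [ld_node, BTree.numLeaves, hl, hr]

theorem numLeaves_pos (t : BTree) : 0 < t.numLeaves := by
  induction t with
  | leaf => simp [BTree.numLeaves]
  | node l r hl hr => simp [BTree.numLeaves]; omega

theorem trunc_leaf (d : ℕ) : trunc d BTree.leaf = [0] := by simp [trunc, ld_leaf]

theorem trunc_node (d : ℕ) (l r : BTree) :
    trunc (d + 1) (BTree.node l r) = (trunc d l).map (· + 1) ++ trunc (d + 1) r := by
  simp only [trunc, ld_node, List.map_append, List.map_map]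
  congr 1
  apply List.map_congr_left
  intro a _
  simp only [Function.comp_apply]
  omega

theorem rd_form (t : BTree) : ∃ l : List ℕ, t.rd = 0 :: l ∧ (∀ a ∈ l, 1 ≤ a) ∧
    l.length + 1 = t.numLeaves := by
  induction t with
  | leaf => exact ⟨[], rfl, by simp, rfl⟩
  | node l r hl hr =>
    obtain ⟨a, ha, ha1, ha2⟩ := hl
    obtain ⟨b, hb, hb1, hb2⟩ := hr
    refine ⟨a ++ (r.rd.map (· + 1)), by simp [rd_node, ha], ?_, ?_⟩
    · intro x hx
      rcases List.mem_append.1 hx with h | h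
      · exact ha1 x h
      · obtain ⟨y, _, rfl⟩ := List.mem_map.1 h
        omega
    · simp [hb, BTree.numLeaves]; omega

theorem forall2_pos (l l' : List ℕ) (h : ∀ a ∈ l, 1 ≤ a) (h' : ∀ a ∈ l', 1 ≤ a)
    (hl : l.length = l'.length) : DepthEq 1 l l' := by
  induction l generalizing l' with
  | nil => cases l' with
    | nil => exact List.Forall₂.nil
    | cons => simp at hl
  | cons a l ih => cases l' with
    | nil => simp at hl
    | cons b l' =>
      refine List.Forall₂.cons ?_ (ih l' ?_ ?_ ?_)
      · intro hh
        have := h a (by simp)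
        have := h' b (by simp)
        omega
      · intro x hx; exact h x (by simp [hx])
      · intro x hx; exact h' x (by simp [hx])
      · simpa using hl

theorem rd_rel (t t' : BTree) (h : t.numLeaves = t'.numLeaves) : DepthEq 1 t.rd t'.rd := by
  obtain ⟨a, ha, ha1, ha2⟩ := rd_form t
  obtain ⟨b, hb, hb1, hb2⟩ := rd_form t'
  rw [ha, hb]
  exact List.Forall₂.cons (fun _ => rfl) (forall2_pos a b ha1 hb1 (by omega))

theorem depthEq_iff (d : ℕ) (b c : List ℕ) :
    DepthEq d b c ↔ b.map (min d) = c.map (min d) := by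
  induction b generalizing c with
  | nil => cases c <;> simp [DepthEq]
  | cons x b ih => cases c with
    | nil => simp [DepthEq]
    | cons y c =>
      have := ih c
      simp only [DepthEq] at this
      simp only [DepthEq, List.forall₂_cons, this, List.map_cons, List.cons.injEq]
      refine and_congr_left fun _ => ?_
      omega

theorem deRel_iff (d : ℕ) (t t' : BTree) (h : t.numLeaves = t'.numLeaves) :
    DeRel d 1 t t' ↔ trunc d t = trunc d t' := by
  unfold DeRel trunc
  rw [depthEq_iff, and_iff_left (rd_rel t t' h)]

/-- Set of truncated sequences of trees with `m` leaves. -/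
def SS (d m : ℕ) : Set (List ℕ) := {s | ∃ t : BTree, t.numLeaves = m ∧ trunc d t = s}

theorem SS_finite (d m : ℕ) : (SS d m).Finite := by
  apply (List.finite_length_eq (Fin (d + 1)) m).image (List.map Fin.val) |>.subset
  rintro s ⟨t, ht, rfl⟩
  refine ⟨t.ld.map (fun a => ⟨min d a, by omega⟩), ?_, ?_⟩
  · simp [length_ld, ht]
  · simp [trunc, Function.comp_def]

/-- The same set as a finset. -/
noncomputable def SF (d m : ℕ) : Finset (List ℕ) := (SS_finite d m).toFinset

theorem mem_SF {d m : ℕ} {s : List ℕ} :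
    s ∈ SF d m ↔ ∃ t : BTree, t.numLeaves = m ∧ trunc d t = s := by
  simp [SF, SS]

theorem Cde_eq (d n : ℕ) : Cde d 1 n = (SF d (n + 1)).card := by
  rw [SF, ← Nat.card_eq_card_finite_toFinset, Cde]
  refine Nat.card_congr (Equiv.ofBijective
    (Quot.lift (fun t : Tn n => (⟨trunc d t.1, t.1, t.2, rfl⟩ : SS d (n + 1))) ?_) ⟨?_, ?_⟩)
  · intro a b hab
    exact Subtype.ext ((deRel_iff d _ _ (a.2.trans b.2.symm)).1 hab)
  · intro a b
    induction a using Quot.ind with | _ a =>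
    induction b using Quot.ind with | _ b =>
    intro h
    apply Quot.sound
    exact (deRel_iff d _ _ (a.2.trans b.2.symm)).2 (congrArg Subtype.val h)
  · rintro ⟨s, t, ht, rfl⟩
    exact ⟨Quot.mk _ ⟨t, ht⟩, rfl⟩

theorem SF_zero (d : ℕ) : SF d 0 = ∅ := by
  ext s
  simp only [mem_SF, Finset.notMem_empty, iff_false]
  rintro ⟨t, ht, _⟩
  have := numLeaves_pos t
  omega

theorem coeff_CdX (d m : ℕ) : PowerSeries.coeff m (CdX (d + 1)) = ((SF (d + 1) m).card : ℚ) := by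
  cases m with
  | zero => simp [CdX, SF_zero]
  | succ n => simp [CdX, Cde_eq]

theorem leaf_of_one (t : BTree) (h : t.numLeaves = 1) : t = BTree.leaf := by
  cases t with
  | leaf => rfl
  | node l r =>
    have := numLeaves_pos l
    have := numLeaves_pos r
    simp [BTree.numLeaves] at h
    omega

theorem SF_one (d : ℕ) : SF d 1 = {[0]} := by
  ext s
  simp only [mem_SF, Finset.mem_singleton]
  constructor
  · rintro ⟨t, ht, rfl⟩
    rw [leaf_of_one t ht, trunc_leaf]
  · rintro rfl
    exact ⟨BTree.leaf, rfl, trunc_leaf d⟩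

theorem trunc_form (d : ℕ) (t : BTree) : ∃ a : List ℕ, trunc (d + 1) t = a ++ [0] ∧ 0 ∉ a := by
  induction t with
  | leaf => exact ⟨[], by simp [trunc_leaf]⟩
  | node l r hl hr =>
    obtain ⟨b, hb, hb0⟩ := hr
    refine ⟨(trunc d l).map (· + 1) ++ b, by simp [trunc_node, hb], ?_⟩
    simp [hb0]

theorem split_unique (a a' b b' : List ℕ) (ha : 1 ∉ a) (ha' : 1 ∉ a')
    (h : a ++ 1 :: b = a' ++ 1 :: b') : a = a' ∧ b = b' := by
  induction a generalizing a' with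
  | nil => cases a' with
    | nil => simpa using h
    | cons x a' => simp at h ha'; omega
  | cons y a ih => cases a' with
    | nil => simp at h ha; omega
    | cons x a' =>
      simp only [List.cons_append, List.cons.injEq] at h
      simp only [List.mem_cons, not_or] at ha ha'
      obtain ⟨h1, h2⟩ := ih a' ha.2 ha'.2 h.2
      exact ⟨by rw [h.1, h1], h2⟩

theorem trunc_inj (d : ℕ) (l l' : BTree) (b b' : List ℕ)
    (h : (trunc (d + 1) l).map (· + 1) ++ b = (trunc (d + 1) l').map (· + 1) ++ b') :
    trunc (d + 1) l = trunc (d + 1) l' ∧ b = b' := by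
  obtain ⟨a, ha, ha0⟩ := trunc_form d l
  obtain ⟨a', ha', ha0'⟩ := trunc_form d l'
  rw [ha, ha'] at h ⊢
  simp only [List.map_append, List.map_cons, List.map_nil, List.append_assoc, List.cons_append,
    List.nil_append, zero_add] at h
  obtain ⟨h1, h2⟩ := split_unique _ _ _ _ (by simpa using ha0) (by simpa using ha0') h
  have : a = a' := List.map_injective_iff.2 (add_left_injective 1) h1
  exact ⟨by rw [this], h2⟩

theorem card_rec (d m : ℕ) : (SF (d + 2) (m + 2)).card =
    ∑ p ∈ Finset.HasAntidiagonal.antidiagonal (m + 2), (SF (d + 1) p.1).card * (SF (d + 2) p.2).card := by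
  simp_rw [← Finset.card_product]
  rw [← Finset.card_sigma]
  symm
  apply Finset.card_bij (fun x _ => x.2.1.map (· + 1) ++ x.2.2)
  · rintro ⟨⟨i, j⟩, s, u⟩ h
    simp only [Finset.mem_sigma, Finset.HasAntidiagonal.mem_antidiagonal, Finset.mem_product, mem_SF] at h
    obtain ⟨hij, ⟨l, hl, rfl⟩, ⟨r, hr, rfl⟩⟩ := h
    exact mem_SF.2 ⟨BTree.node l r, by simp [BTree.numLeaves, hl, hr, hij], trunc_node _ _ _⟩
  · rintro ⟨⟨i, j⟩, s, u⟩ h ⟨⟨i', j'⟩, s', u'⟩ h' heq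
    simp only [Finset.mem_sigma, Finset.HasAntidiagonal.mem_antidiagonal, Finset.mem_product, mem_SF] at h h'
    obtain ⟨hij, ⟨l, hl, rfl⟩, ⟨r, hr, rfl⟩⟩ := h
    obtain ⟨hij', ⟨l', hl', rfl⟩, ⟨r', hr', rfl⟩⟩ := h'
    obtain ⟨h1, h2⟩ := trunc_inj d l l' _ _ heq
    have e1 := congrArg List.length h1
    simp only [trunc, List.length_map, length_ld] at e1
    have hi : i = i' := by omega
    have hj : j = j' := by omega
    subst hi hj
    dsimp only at h2
    rw [h1, h2]
  · intro s hs
    obtain ⟨t, ht, rfl⟩ := mem_SF.1 hs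
    cases t with
    | leaf => simp [BTree.numLeaves] at ht
    | node l r =>
      refine ⟨⟨(l.numLeaves, r.numLeaves), trunc (d + 1) l, trunc (d + 2) r⟩, ?_,
        (trunc_node _ _ _).symm⟩
      simp only [Finset.mem_sigma, Finset.HasAntidiagonal.mem_antidiagonal, Finset.mem_product, mem_SF]
      exact ⟨by simpa [BTree.numLeaves] using ht, ⟨l, rfl, rfl⟩, ⟨r, rfl, rfl⟩⟩

theorem trunc_one (t : BTree) : trunc 1 t = List.replicate (t.numLeaves - 1) 1 ++ [0] := by
  induction t with
  | leaf => simp [trunc_leaf, BTree.numLeaves]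
  | node l r hl hr =>
    have h0 : (trunc 0 l).map (· + 1) = List.replicate l.numLeaves 1 := by
      rw [List.eq_replicate_iff]
      simp [trunc, length_ld]
    rw [trunc_node 0 l r, h0]
    simp only [zero_add]
    rw [hr, ← List.append_assoc, ← List.replicate_add]
    have := numLeaves_pos r
    congr 2
    simp only [BTree.numLeaves]
    omega

theorem exists_tree (n : ℕ) : ∃ t : BTree, t.numLeaves = n + 1 := by
  induction n with
  | zero => exact ⟨BTree.leaf, rfl⟩
  | succ n ih =>
    obtain ⟨t, ht⟩ := ih
    exact ⟨BTree.node BTree.leaf t, by simp [BTree.numLeaves, ht]; omega⟩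

theorem card_SF_one (n : ℕ) : (SF 1 (n + 1)).card = 1 := by
  rw [Finset.card_eq_one]
  refine ⟨List.replicate n 1 ++ [0], ?_⟩
  ext s
  simp only [mem_SF, Finset.mem_singleton]
  constructor
  · rintro ⟨t, ht, rfl⟩
    rw [trunc_one, ht]; rfl
  · rintro rfl
    obtain ⟨t, ht⟩ := exists_tree n
    exact ⟨t, ht, by rw [trunc_one, ht]; rfl⟩

theorem CdX_rec (d : ℕ) : (1 - CdX d) * CdX (d + 1) = PowerSeries.X := by
  rw [sub_mul, one_mul, sub_eq_iff_eq_add]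
  ext m
  rw [map_add]
  cases d with
  | zero =>
    have h0 : CdX 0 = PowerSeries.X := rfl
    rw [h0]
    rcases m with _ | _ | m
    · simp [coeff_CdX 0, SF_zero]
    · rw [PowerSeries.coeff_succ_X_mul, coeff_CdX, coeff_CdX]
      simp [SF_one, SF_zero]
    · rw [PowerSeries.coeff_succ_X_mul, coeff_CdX, coeff_CdX]
      simp only [zero_add, card_SF_one]
      simp [PowerSeries.coeff_X]
  | succ d =>
    rw [PowerSeries.coeff_mul]
    simp only [coeff_CdX]
    rcases m with _ | _ | m
    · simp [SF_zero]
    · simp [SF_one, SF_zero, Finset.Nat.antidiagonal_succ]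
    · rw [card_rec]
      simp [PowerSeries.coeff_X]

theorem CdX_fib (d : ℕ) : FibP (d + 2) * CdX d = PowerSeries.X * FibP (d + 1) := by
  induction d with
  | zero => simp [FibP, CdX]
  | succ d ih =>
    have h := CdX_rec d
    have hF : FibP (d + 1 + 2) = FibP (d + 2) - PowerSeries.X * FibP (d + 1) := rfl
    rw [hF]
    change _ = PowerSeries.X * FibP (d + 2)
    linear_combination FibP (d + 2) * h + CdX (d + 1) * ih

/-- for `d ≥ 1`, `(1 - C^{d-1}(x))·C^d(x) = x` (where `C^0(x) := x`), and
`F_{d+2}(x)·C^d(x) = x·F_{d+1}(x)`. -/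
theorem stmt4 (d : ℕ) (hd : 1 ≤ d) :
    (1 - CdX (d - 1)) * CdX d = PowerSeries.X ∧
    FibP (d + 2) * CdX d = PowerSeries.X * FibP (d + 1) := by
  obtain ⟨d, rfl⟩ : ∃ k, d = k + 1 := ⟨d - 1, by omega⟩
  exact ⟨CdX_rec d, CdX_fib (d + 1)⟩
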